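/- Let γ=(B,M,S,A,Â) be a market with middlemen. Then the associated middlemen matching market game v_γ is totally balanced: for every nonempty coalition T⊆N, the subgame (T, v_γ restricted to subsets of T) has a nonempty core. -/

import Mathlib

/-!
Matching markets with middlemen (Atay, Bahel, Solymosi).

Players are of three sorts: buyers `B`, middlemen `M`, sellers `S`
(three disjoint nonempty finite types); the player set is `Player B M S = B ⊕ M ⊕ S`.
An (functional representation of a) `T`-matching assigns to each buyer either nothing
(the buyer is single), a seller (direct trade), or a middleman together with a seller
(mediated trade); distinct buyers get distinct sellers, and all agents involved lie in `T`.
A middleman may mediate several trades.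
-/

open scoped Classical

noncomputable section

/-- The set of players of a market with middlemen: buyers `B`, middlemen `M`, sellers `S`. -/
abbrev Player (B M S : Type*) := B ⊕ M ⊕ S

/-- Functional representation of a matching in the market with middlemen: each buyer is
unmatched (`none`), matched directly to a seller (`some (none, k)`), or matched to a seller
through a middleman (`some (some j, k)`). -/
abbrev MMatch (B M S : Type*) := B → Option (Option M × S)

namespace Middlemen

variable {B M S : Type*}

/-- A buyer as a player. -/
def buyer (i : B) : Player B M S := Sum.inl i

/-- A middleman as a player. -/
def mid (j : M) : Player B M S := Sum.inr (Sum.inl j)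

/-- A seller as a player. -/
def seller (k : S) : Player B M S := Sum.inr (Sum.inr k)

/-- `f` is a `T`-matching in the market with middlemen: every basic coalition used by `f`
is contained in `T` and no seller is matched to two distinct buyers.  (Buyers, middlemen
and sellers of `T` not appearing in any trade are singletons of the matching.) -/
def IsMatching (T : Finset (Player B M S)) (f : MMatch B M S) : Prop :=
  (∀ i o k, f i = some (o, k) →
      buyer i ∈ T ∧ seller k ∈ T ∧ ∀ j, o = some j → mid j ∈ T) ∧
  (∀ i i' o o' k, f i = some (o, k) → f i' = some (o', k) → i = i')

variable [Fintype B] [Fintype M] [Fintype S]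

/-- The value `Σ_{(i,k)∈μ} a_{ik} + Σ_{(i,j,k)∈μ} â_{ijk}` of a matching in the market
with middlemen with direct-trade surplus matrix `A` and mediated-trade surpluses `Ah`. -/
def mval (A : B → S → ℝ) (Ah : B → M → S → ℝ) (f : MMatch B M S) : ℝ :=
  ∑ i, (match f i with
    | none => 0
    | some (none, k) => A i k
    | some (some j, k) => Ah i j k)

/-- The TU game `v_γ` associated with the market with middlemen `γ = (B,M,S,A,Ah)`:
the worth of a coalition `T` is the maximal value of a `T`-matching. -/
def vGame (A : B → S → ℝ) (Ah : B → M → S → ℝ) (T : Finset (Player B M S)) : ℝ :=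
  sSup { r | ∃ f : MMatch B M S, IsMatching T f ∧ r = mval A Ah f }

/-- `g` is a matching of the coalition `R` in a two-sided assignment market. -/
def IsMatching2 (R : Finset (B ⊕ S)) (g : B → Option S) : Prop :=
  (∀ i k, g i = some k → Sum.inl i ∈ R ∧ Sum.inr k ∈ R) ∧
  (∀ i i' k, g i = some k → g i' = some k → i = i')

/-- The value of a two-sided matching with valuation matrix `As`. -/
def m2val (As : B → S → ℝ) (g : B → Option S) : ℝ :=
  ∑ i, (match g i with
    | none => 0
    | some k => As i k)

/-- The assignment game `w_{γ*}` of the two-sided assignment market `(B,S,As)`. -/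
def wGame (As : B → S → ℝ) (R : Finset (B ⊕ S)) : ℝ :=
  sSup { r | ∃ g : B → Option S, IsMatching2 R g ∧ r = m2val As g }

/-- The matrix `A*` of the associated two-sided assignment market:
`a*_{ik} = max_{j ∈ M} â_{ijk}`. -/
def Astar [Nonempty M] (Ah : B → M → S → ℝ) (i : B) (k : S) : ℝ :=
  Finset.univ.sup' Finset.univ_nonempty fun j => Ah i j k

/-- The two-sided matching `μ*` induced by a matching `μ` of the market with middlemen:
keep all matched buyer–seller pairs (dropping the middlemen). -/
def star (f : MMatch B M S) : B → Option S := fun i => (f i).map Prod.snd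

/-- `m(i,k)`: the lowest-indexed middleman `j` maximizing `â_{ijk}`. -/
def bestMid [Nonempty M] [LinearOrder M] (Ah : B → M → S → ℝ) (i : B) (k : S) : M :=
  (Finset.univ.filter fun j => ∀ j' : M, Ah i j' k ≤ Ah i j k).min' (by
    obtain ⟨j, -, hj⟩ := Finset.exists_max_image (Finset.univ : Finset M)
      (fun j => Ah i j k) Finset.univ_nonempty
    exact ⟨j, Finset.mem_filter.mpr ⟨Finset.mem_univ _, fun j' => hj j' (Finset.mem_univ _)⟩⟩)

/-- The matching `σ^△` of the market with middlemen induced by a two-sided matching `σ`: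
each matched pair `{i,k}` of `σ` trades through the best middleman `m(i,k)`
(and every other middleman is a singleton). -/
def triangle [Nonempty M] [LinearOrder M] (Ah : B → M → S → ℝ) (g : B → Option S) :
    MMatch B M S :=
  fun i => (g i).map fun k => (some (bestMid Ah i k), k)

/-- The core of a TU game on the finite player set `P`. -/
def core {P : Type*} [Fintype P] (v : Finset P → ℝ) : Set (P → ℝ) :=
  { x | ∑ t, x t = v Finset.univ ∧ ∀ T : Finset P, v T ≤ ∑ t ∈ T, x t }

/-- Augment a payoff vector of the two-sided market with zero payoffs to all middlemen. -/
def aug (xz : B ⊕ S → ℝ) : Player B M S → ℝ := fun t =>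
  match t with
  | Sum.inl i => xz (Sum.inl i)
  | Sum.inr (Sum.inl _) => 0
  | Sum.inr (Sum.inr k) => xz (Sum.inr k)

/-- Restrict a payoff vector of the market with middlemen to the buyers and sellers. -/
def restrictBS (X : Player B M S → ℝ) : B ⊕ S → ℝ := fun t =>
  match t with
  | Sum.inl i => X (buyer i)
  | Sum.inr k => X (seller k)

/-- The set `T ∩ (B ∪ S)` of buyers and sellers of a coalition `T`. -/
def bsPart (T : Finset (Player B M S)) : Finset (B ⊕ S) :=
  Finset.univ.filter fun t =>
    match t with
    | Sum.inl i => buyer i ∈ T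
    | Sum.inr k => (seller k : Player B M S) ∈ T

/-- The coalition `R ∪ M` consisting of the buyers and sellers of `R` together with
all middlemen. -/
def withAllMid (R : Finset (B ⊕ S)) : Finset (Player B M S) :=
  Finset.univ.filter fun t =>
    match t with
    | Sum.inl i => Sum.inl i ∈ R
    | Sum.inr (Sum.inl _) => True
    | Sum.inr (Sum.inr k) => Sum.inr k ∈ R

end Middlemen

namespace Middlemen

/-!
For a fixed coalition `T`, let `a_{ik}` be the best surplus the pair `(i, k)` can reach directly or
through a middleman of `T`. Since a middleman can serve arbitrarily many pairs, `T` can achieve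
exactly as much as in the two-sided assignment market `(B ∩ T, S ∩ T, a)`, and its subcoalitions at
most as much. So a core payoff of that market, with zero paid to every middleman, lies in the core
of the subgame on `T`.

The assignment market has a nonempty core by Egerváry's theorem: for a nonnegative square matrix
`W`, take potentials `u i + v j ≥ W i j` of least total weight. If the tight pairs had no perfect
matching, Hall's theorem would give a set `X` of rows with fewer than `#X` tight neighbours, and
lowering `u` on `X` while raising `v` on these neighbours would reduce the total weight.
-/

section Egervary

variable {α β n : Type*}

/-- Potentials `u`, `v` dominating the matrix `W`: the feasible solutions of the linear program dual
to the assignment problem. No sign is imposed on `u` and `v`. -/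
def IsCover (W : α → β → ℝ) (u : α → ℝ) (v : β → ℝ) : Prop :=
  ∀ i j, W i j ≤ u i + v j

/-- Covers of least total weight: the optimal solutions of the linear program dual to the assignment
problem, the competitors being covers of arbitrary sign. -/
structure IsMinCover [Fintype α] [Fintype β] (W : α → β → ℝ) (u : α → ℝ) (v : β → ℝ) : Prop where
  isCover : IsCover W u v
  sum_le : ∀ u' v', IsCover W u' v' → ∑ i, u i + ∑ j, v j ≤ ∑ i, u' i + ∑ j, v' j

theorem exists_isMinOn_sum_of_isClosed_of_nonneg {ι : Type*} [Fintype ι] {C : Set (ι → ℝ)}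
    (hC : IsClosed C) (hne : C.Nonempty) (hnonneg : ∀ z ∈ C, 0 ≤ z) :
    ∃ z ∈ C, IsMinOn (fun z => ∑ i, z i) C z := by
  obtain ⟨z₀, hz₀⟩ := hne
  have hcont : Continuous fun z : ι → ℝ => ∑ i, z i := by fun_prop
  refine hcont.continuousOn.exists_isMinOn' hC hz₀ ?_
  have hbox : ∀ᶠ z in Filter.cocompact (ι → ℝ), z ∉ Set.Icc 0 fun _ => ∑ i, z₀ i :=
    isCompact_Icc.compl_mem_cocompact
  filter_upwards [Filter.mem_inf_of_left hbox,
    Filter.mem_inf_of_right (Filter.mem_principal_self C)] with z hz hzC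
  by_contra! hlt
  have hle (i : ι) : z i ≤ ∑ i, z i :=
    Finset.single_le_sum (fun j _ => hnonneg z hzC j) (Finset.mem_univ i)
  exact hz ⟨hnonneg z hzC, fun i => (hle i).trans hlt.le⟩

theorem exists_nonneg_isCover_sum_le [Fintype α] [Fintype β] (W : α → β → ℝ) :
    ∃ u v, 0 ≤ u ∧ 0 ≤ v ∧ IsCover W u v ∧ ∀ u' v', 0 ≤ u' → 0 ≤ v' → IsCover W u' v' →
      ∑ i, u i + ∑ j, v j ≤ ∑ i, u' i + ∑ j, v' j := by
  let C : Set (α ⊕ β → ℝ) := {z | 0 ≤ z ∧ ∀ i j, W i j ≤ z (Sum.inl i) + z (Sum.inr j)}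
  have hclosed : IsClosed C := by
    simp only [C, Set.ofPred_and, Set.ofPred_forall]
    exact (isClosed_le continuous_const continuous_id).inter <|
      isClosed_iInter fun i => isClosed_iInter fun j => isClosed_le (by fun_prop) (by fun_prop)
  have hne : C.Nonempty := by
    refine ⟨Sum.elim (fun i => ∑ j, |W i j|) 0, ?_, fun i j => ?_⟩
    · rintro (i | j)
      · exact Finset.sum_nonneg fun j _ => abs_nonneg (W i j)
      · exact le_rfl
    · simpa using (le_abs_self _).trans
        (Finset.single_le_sum (fun j _ => abs_nonneg (W i j)) (Finset.mem_univ j))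
  obtain ⟨z, ⟨hz, hcover⟩, hmin⟩ :=
    exists_isMinOn_sum_of_isClosed_of_nonneg hclosed hne fun _ h => h.1
  refine ⟨z ∘ Sum.inl, z ∘ Sum.inr, fun i => hz _, fun j => hz _, hcover,
    fun u' v' hu' hv' hcover' => ?_⟩
  have hmem : Sum.elim u' v' ∈ C := ⟨Sum.rec hu' hv', hcover'⟩
  simpa [Fintype.sum_sum_type] using hmin hmem

theorem IsCover.exists_nonneg_isCover_sum_eq [Fintype n] {W : n → n → ℝ} {u v : n → ℝ}
    (h : IsCover W u v) (hW : ∀ i j, 0 ≤ W i j) :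
    ∃ u' v', 0 ≤ u' ∧ 0 ≤ v' ∧ IsCover W u' v' ∧
      ∑ i, u' i + ∑ j, v' j = ∑ i, u i + ∑ j, v j := by
  cases isEmpty_or_nonempty n
  · exact ⟨0, 0, le_rfl, le_rfl, isEmptyElim, by simp⟩
  · obtain ⟨j₀, hj₀⟩ := Finite.exists_min v
    refine ⟨fun i => u i + v j₀, fun j => v j - v j₀, fun i => (hW i j₀).trans (h i j₀),
      fun j => sub_nonneg.2 (hj₀ j), fun i j => ?_, ?_⟩
    · linarith [h i j]
    · simp only [Finset.sum_add_distrib, Finset.sum_sub_distrib]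
      ring

theorem exists_nonneg_isMinCover [Fintype n] {W : n → n → ℝ} (hW : ∀ i j, 0 ≤ W i j) :
    ∃ u v, 0 ≤ u ∧ 0 ≤ v ∧ IsMinCover W u v := by
  obtain ⟨u, v, hu, hv, hcover, hmin⟩ := exists_nonneg_isCover_sum_le W
  refine ⟨u, v, hu, hv, hcover, fun u' v' h' => ?_⟩
  obtain ⟨u'', v'', hu'', hv'', h'', hsum⟩ := h'.exists_nonneg_isCover_sum_eq hW
  exact (hmin u'' v'' hu'' hv'' h'').trans_eq hsum

theorem IsCover.exists_pos_isCover_shift [Finite α] [Finite β] {W : α → β → ℝ} {u : α → ℝ}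
    {v : β → ℝ} (h : IsCover W u v) {X : Finset α} {Y : Finset β}
    (hY : ∀ i ∈ X, ∀ j, W i j = u i + v j → j ∈ Y) :
    ∃ ε > 0, IsCover W (fun i => u i - if i ∈ X then ε else 0)
      (fun j => v j + if j ∈ Y then ε else 0) := by
  obtain ⟨ε, hε, hslack⟩ :=
    Pi.exists_forall_pos_add_lt (ι := {p : α × β // p.1 ∈ X ∧ p.2 ∉ Y})
      (x := fun p => W p.1.1 p.1.2) (y := fun p => u p.1.1 + v p.1.2)
      fun ⟨(i, j), hi, hj⟩ => (h i j).lt_of_ne fun htight => hj (hY i hi j htight)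
  refine ⟨ε, hε, fun i j => ?_⟩
  have hij := h i j
  by_cases hi : i ∈ X <;> by_cases hj : j ∈ Y <;> simp only [hi, hj, if_true, if_false]
  · linarith
  · linarith [hslack ⟨(i, j), hi, hj⟩]
  · linarith
  · linarith

theorem IsMinCover.card_le_card_biUnion_tight [Fintype α] [Fintype β] {W : α → β → ℝ}
    {u : α → ℝ} {v : β → ℝ} (h : IsMinCover W u v) (X : Finset α) :
    X.card ≤ (X.biUnion fun i => {j | W i j = u i + v j}).card := by
  set Y := X.biUnion fun i => {j | W i j = u i + v j}
  obtain ⟨ε, hε, hshift⟩ := h.isCover.exists_pos_isCover_shift (X := X) (Y := Y)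
    fun i hi j htight => Finset.mem_biUnion.2 ⟨i, hi, by simpa using htight⟩
  have hle := h.sum_le _ _ hshift
  simp only [Finset.sum_sub_distrib, Finset.sum_add_distrib, Finset.sum_ite_mem,
    Finset.univ_inter, Finset.sum_const, nsmul_eq_mul] at hle
  have hmul : (X.card : ℝ) * ε ≤ Y.card * ε := by linarith
  exact_mod_cast le_of_mul_le_mul_right hmul hε

theorem IsMinCover.exists_perm_tight [Fintype n] {W : n → n → ℝ} {u v : n → ℝ}
    (h : IsMinCover W u v) : ∃ σ : Equiv.Perm n, ∀ i, W i (σ i) = u i + v (σ i) := by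
  obtain ⟨σ, hinj, htight⟩ := (Finset.all_card_le_biUnion_card_iff_exists_injective _).1
    h.card_le_card_biUnion_tight
  exact ⟨Equiv.ofBijective σ hinj.bijective_of_finite, fun i => by simpa using htight i⟩

theorem exists_nonneg_cover_perm_sum_eq (s : Finset α) {W : α → α → ℝ}
    (hW : ∀ i j, 0 ≤ W i j) :
    ∃ u v : α → ℝ, 0 ≤ u ∧ 0 ≤ v ∧ (∀ i ∈ s, ∀ j ∈ s, W i j ≤ u i + v j) ∧
      ∃ σ : Equiv.Perm α, (∀ i ∉ s, σ i = i) ∧ ∑ i ∈ s, (u i + v i) = ∑ i ∈ s, W i (σ i) := by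
  obtain ⟨u, v, hu, hv, hmin⟩ := exists_nonneg_isMinCover fun i j : s => hW i j
  obtain ⟨σ, hσ⟩ := hmin.exists_perm_tight
  have hext {f : s → ℝ} (hf : 0 ≤ f) : 0 ≤ Function.extend Subtype.val f 0 := fun i => by
    rw [Function.extend_def]
    split_ifs
    exacts [hf _, le_rfl]
  have hval (f : s → ℝ) (i : s) : Function.extend Subtype.val f 0 (i : α) = f i :=
    Subtype.val_injective.extend_apply f 0 i
  refine ⟨Function.extend Subtype.val u 0, Function.extend Subtype.val v 0, hext hu, hext hv,
    fun i hi j hj => ?_, Equiv.Perm.ofSubtype σ,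
    fun i hi => Equiv.Perm.ofSubtype_apply_of_not_mem σ hi, ?_⟩
  · rw [hval u ⟨i, hi⟩, hval v ⟨j, hj⟩]
    exact hmin.isCover ⟨i, hi⟩ ⟨j, hj⟩
  · rw [← Finset.sum_coe_sort s, ← Finset.sum_coe_sort s]
    simp only [hval, Equiv.Perm.ofSubtype_apply_coe, hσ, Finset.sum_add_distrib,
      Equiv.sum_comp σ v]

end Egervary

section Assignment

variable {B S : Type*}

/-- The square matrix on `B ⊕ S` obtained from the positive part of `w` by adding zero blocks.
Pairs outside the buyer–seller block stand for agents staying unmatched. -/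
def padded (w : B → S → ℝ) : B ⊕ S → B ⊕ S → ℝ
  | Sum.inl i, Sum.inr k => max (w i k) 0
  | _, _ => 0

theorem padded_nonneg (w : B → S → ℝ) : ∀ s t, 0 ≤ padded w s t
  | Sum.inl i, Sum.inr k => le_max_right (w i k) 0
  | Sum.inl _, Sum.inl _ => le_rfl
  | Sum.inr _, _ => le_rfl

/-- The two-sided matching read off from a permutation of the agents: buyer `i` is matched with the
seller `σ i`, unless `σ i` is a buyer or the pair has negative surplus. -/
def matchingOfPerm (w : B → S → ℝ) (σ : Equiv.Perm (B ⊕ S)) (i : B) : Option S :=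
  (σ (Sum.inl i)).getRight?.filter fun k => 0 ≤ w i k

theorem matchingOfPerm_eq_some_iff {w : B → S → ℝ} {σ : Equiv.Perm (B ⊕ S)} {i : B} {k : S} :
    matchingOfPerm w σ i = some k ↔ σ (Sum.inl i) = Sum.inr k ∧ 0 ≤ w i k := by
  simp [matchingOfPerm, Option.filter_eq_some_iff]

theorem isMatching2_matchingOfPerm (w : B → S → ℝ) {R : Finset (B ⊕ S)}
    {σ : Equiv.Perm (B ⊕ S)} (hσ : ∀ t ∉ R, σ t = t) : IsMatching2 R (matchingOfPerm w σ) := by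
  simp only [IsMatching2, matchingOfPerm_eq_some_iff]
  refine ⟨fun i k ⟨hik, _⟩ => ⟨?_, ?_⟩, fun i i' k ⟨hik, _⟩ ⟨hi'k, _⟩ =>
    Sum.inl_injective (σ.injective (hik.trans hi'k.symm))⟩
  · by_contra hi
    simp [hσ _ hi] at hik
  · by_contra hk
    simpa using σ.injective (hik.trans (hσ _ hk).symm)

theorem m2val_eq_sum_elim [Fintype B] (w : B → S → ℝ) (g : B → Option S) :
    m2val w g = ∑ i, (g i).elim 0 (w i) :=
  Finset.sum_congr rfl fun i _ => by cases g i <;> rfl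

theorem m2val_matchingOfPerm [Fintype B] (w : B → S → ℝ) {R : Finset (B ⊕ S)}
    {σ : Equiv.Perm (B ⊕ S)} (hσ : ∀ t ∉ R, σ t = t) :
    m2val w (matchingOfPerm w σ) = ∑ t ∈ R, padded w t (σ t) := by
  have hvalue (i : B) :
      (matchingOfPerm w σ i).elim 0 (w i) = padded w (Sum.inl i) (σ (Sum.inl i)) := by
    rcases hi : σ (Sum.inl i) with i' | k
    · simp [matchingOfPerm, padded, hi]
    · by_cases hk : 0 ≤ w i k
      · simp [matchingOfPerm, padded, hi, Option.filter_some, hk]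
      · simp [matchingOfPerm, padded, hi, Option.filter_some, hk, (not_le.1 hk).le]
  have hoff (i : B) (hi : i ∉ R.toLeft) : padded w (Sum.inl i) (σ (Sum.inl i)) = 0 := by
    rw [hσ _ (by simpa using hi), padded]
    simp
  have hseller (k : S) : padded w (Sum.inr k) (σ (Sum.inr k)) = 0 := rfl
  simp only [m2val_eq_sum_elim, hvalue, Finset.sum_sum_eq_sum_toLeft_add_sum_toRight, hseller,
    Finset.sum_const_zero, add_zero]
  exact (Finset.sum_subset (Finset.subset_univ _) fun i _ => hoff i).symm

theorem exists_payoff_sum_le_m2val [Fintype B] (w : B → S → ℝ) (R : Finset (B ⊕ S)) :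
    ∃ x : B ⊕ S → ℝ, 0 ≤ x ∧
      (∀ i k, Sum.inl i ∈ R → Sum.inr k ∈ R → w i k ≤ x (Sum.inl i) + x (Sum.inr k)) ∧
      ∃ g, IsMatching2 R g ∧ ∑ t ∈ R, x t ≤ m2val w g := by
  obtain ⟨u, v, hu, hv, hcover, σ, hσ, hsum⟩ :=
    exists_nonneg_cover_perm_sum_eq R (padded_nonneg w)
  refine ⟨Sum.elim (u ∘ Sum.inl) (v ∘ Sum.inr), Sum.rec (fun i => hu _) (fun k => hv _),
    fun i k hi hk => (le_max_left _ _).trans (hcover _ hi _ hk),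
    matchingOfPerm w σ, isMatching2_matchingOfPerm w hσ, ?_⟩
  rw [m2val_matchingOfPerm w hσ, ← hsum]
  refine Finset.sum_le_sum fun t _ => ?_
  rcases t with i | k
  · exact le_add_of_nonneg_right (hv _)
  · exact le_add_of_nonneg_left (hu _)

theorem sum_elim_le_sum_of_nonneg {α β N : Type*} [AddCommMonoid N] [PartialOrder N]
    [IsOrderedAddMonoid N] {s : Finset α} {t : Finset β} {g : α → Option β} {y : β → N}
    (hy : 0 ≤ y) (hmaps : ∀ i k, g i = some k → k ∈ t)
    (hinj : ∀ i i' k, g i = some k → g i' = some k → i = i') :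
    ∑ i ∈ s, (g i).elim 0 y ≤ ∑ k ∈ t, y k := by
  have hdisj : (s : Set α).PairwiseDisjoint fun i => (g i).toFinset := fun i _ i' _ hne =>
    Finset.disjoint_left.2 fun k hk hk' =>
      hne (hinj i i' k (by simpa using hk) (by simpa using hk'))
  have helim (i : α) : (g i).elim 0 y = ∑ k ∈ (g i).toFinset, y k := by cases g i <;> simp
  calc ∑ i ∈ s, (g i).elim 0 y = ∑ k ∈ s.biUnion fun i => (g i).toFinset, y k := by
        simp only [helim, Finset.sum_biUnion hdisj]
    _ ≤ ∑ k ∈ t, y k := by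
        refine Finset.sum_le_sum_of_subset_of_nonneg (Finset.biUnion_subset.2 fun i _ k hk => ?_)
          fun k _ _ => hy k
        exact hmaps i k (by simpa using hk)

theorem IsMatching2.m2val_le_sum [Fintype B] {w : B → S → ℝ} {R : Finset (B ⊕ S)}
    {g : B → Option S} (hg : IsMatching2 R g) {x : B ⊕ S → ℝ} (hx : 0 ≤ x)
    (hcover : ∀ i k, Sum.inl i ∈ R → Sum.inr k ∈ R → w i k ≤ x (Sum.inl i) + x (Sum.inr k)) :
    m2val w g ≤ ∑ t ∈ R, x t := by
  have hoff (i : B) (hi : i ∉ R.toLeft) : (g i).elim 0 (w i) = 0 := by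
    rcases hgi : g i with _ | k
    · rfl
    · exact absurd (Finset.mem_toLeft.2 (hg.1 i k hgi).1) hi
  calc m2val w g = ∑ i ∈ R.toLeft, (g i).elim 0 (w i) := by
        rw [m2val_eq_sum_elim]
        exact (Finset.sum_subset (Finset.subset_univ _) fun i _ => hoff i).symm
    _ ≤ ∑ i ∈ R.toLeft, (x (Sum.inl i) + (g i).elim 0 (x ∘ Sum.inr)) := by
        refine Finset.sum_le_sum fun i _ => ?_
        rcases hgi : g i with _ | k
        · simpa using hx (Sum.inl i)
        · exact hcover i k (hg.1 i k hgi).1 (hg.1 i k hgi).2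
    _ ≤ ∑ i ∈ R.toLeft, x (Sum.inl i) + ∑ k ∈ R.toRight, x (Sum.inr k) := by
        rw [Finset.sum_add_distrib]
        gcongr
        exact sum_elim_le_sum_of_nonneg (fun k => hx _)
          (fun i k hik => Finset.mem_toRight.2 (hg.1 i k hik).2) hg.2
    _ = ∑ t ∈ R, x t := (Finset.sum_sum_eq_sum_toLeft_add_sum_toRight R x).symm

end Assignment

section Reduction

variable {B M S : Type*} {T T' : Finset (Player B M S)}

/-- The surplus of the pair `(i, k)`, trading directly (`none`) or through a middleman. -/
def surplus (A : B → S → ℝ) (Ah : B → M → S → ℝ) (i : B) (k : S) : Option M → ℝ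
  | none => A i k
  | some j => Ah i j k

/-- The best surplus the pair `(i, k)` can reach directly or through a middleman of `T`. This is the
version of `Astar` for the subgame on `T`, which may contain no middleman at all. -/
def bestSurplus (A : B → S → ℝ) (Ah : B → M → S → ℝ) (T : Finset (Player B M S)) (i : B) (k : S) :
    ℝ :=
  (Finset.insertNone T.toRight.toLeft).sup' ⟨none, Finset.none_mem_insertNone⟩ (surplus A Ah i k)

/-- The buyers and sellers of the coalition `T`: the version of `bsPart` for possibly infinite
types of agents. -/
def traders (T : Finset (Player B M S)) : Finset (B ⊕ S) :=
  T.toLeft.disjSum T.toRight.toRight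

theorem inl_mem_traders {i : B} : Sum.inl i ∈ traders T ↔ buyer i ∈ T := by
  simp [traders, buyer]

theorem inr_mem_traders {k : S} : Sum.inr k ∈ traders T ↔ seller k ∈ T := by
  simp [traders, seller]

theorem mem_insertNone_middlemen {o : Option M} :
    o ∈ Finset.insertNone T.toRight.toLeft ↔ ∀ j, o = some j → mid j ∈ T := by
  simp [Finset.mem_insertNone, mid]

theorem sum_aug (T : Finset (Player B M S)) (x : B ⊕ S → ℝ) :
    ∑ t ∈ T, aug x t = ∑ t ∈ traders T, x t := by
  simp [traders, aug, Finset.sum_sum_eq_sum_toLeft_add_sum_toRight]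

theorem IsMatching.mono {f : MMatch B M S} (hf : IsMatching T' f) (hT : T' ⊆ T) :
    IsMatching T f :=
  ⟨fun i o k h => ⟨hT (hf.1 i o k h).1, hT (hf.1 i o k h).2.1,
    fun j hj => hT ((hf.1 i o k h).2.2 j hj)⟩, hf.2⟩

theorem IsMatching.isMatching2_star {f : MMatch B M S} (hf : IsMatching T f) :
    IsMatching2 (traders T) (star f) := by
  have hstar {i k} (h : star f i = some k) : ∃ o, f i = some (o, k) := by simpa [star] using h
  refine ⟨fun i k h => ?_, fun i i' k h h' => ?_⟩
  · obtain ⟨o, ho⟩ := hstar h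
    exact ⟨inl_mem_traders.2 (hf.1 i o k ho).1, inr_mem_traders.2 (hf.1 i o k ho).2.1⟩
  · obtain ⟨o, ho⟩ := hstar h
    obtain ⟨o', ho'⟩ := hstar h'
    exact hf.2 i i' o o' k ho ho'

variable [Fintype B] (A : B → S → ℝ) (Ah : B → M → S → ℝ)

theorem mval_eq_sum_elim (f : MMatch B M S) :
    mval A Ah f = ∑ i, (f i).elim 0 fun p => surplus A Ah i p.2 p.1 :=
  Finset.sum_congr rfl fun i _ => by rcases f i with _ | ⟨_ | j, k⟩ <;> rfl

theorem IsMatching.mval_le_m2val_star {f : MMatch B M S} (hf : IsMatching T f) :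
    mval A Ah f ≤ m2val (bestSurplus A Ah T) (star f) := by
  rw [mval_eq_sum_elim, m2val_eq_sum_elim]
  refine Finset.sum_le_sum fun i _ => ?_
  rcases hi : f i with _ | ⟨o, k⟩
  · simp [star, hi]
  · simp only [star, hi, Option.map_some, Option.elim_some]
    exact Finset.le_sup' (surplus A Ah i k) (mem_insertNone_middlemen.2 (hf.1 i o k hi).2.2)

theorem IsMatching2.exists_isMatching_mval_eq {g : B → Option S}
    (hg : IsMatching2 (traders T) g) :
    ∃ f : MMatch B M S, IsMatching T f ∧ mval A Ah f = m2val (bestSurplus A Ah T) g := by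
  have hattained (i : B) (k : S) : ∃ o ∈ Finset.insertNone T.toRight.toLeft,
      bestSurplus A Ah T i k = surplus A Ah i k o :=
    Finset.exists_mem_eq_sup' _ _
  choose best hbest hsurplus using hattained
  let f : MMatch B M S := fun i => (g i).map fun k => (best i k, k)
  have hf {i o k} (h : f i = some (o, k)) : g i = some k ∧ best i k = o := by
    simpa [f, and_comm] using h
  refine ⟨f, ⟨fun i o k h => ?_, fun i i' o o' k h h' => hg.2 i i' k (hf h).1 (hf h').1⟩, ?_⟩
  · obtain ⟨hik, rfl⟩ := hf h
    exact ⟨inl_mem_traders.1 (hg.1 i k hik).1, inr_mem_traders.1 (hg.1 i k hik).2,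
      mem_insertNone_middlemen.1 (hbest i k)⟩
  · rw [mval_eq_sum_elim, m2val_eq_sum_elim]
    refine Finset.sum_congr rfl fun i _ => ?_
    cases hi : g i <;> simp [f, hi, hsurplus]

theorem vGame_le_of_forall_mval_le {c : ℝ}
    (h : ∀ f : MMatch B M S, IsMatching T f → mval A Ah f ≤ c) : vGame A Ah T ≤ c := by
  refine csSup_le ⟨_, fun _ => none, ⟨by simp, by simp⟩, rfl⟩ ?_
  rintro _ ⟨f, hf, rfl⟩
  exact h f hf

end Reduction

theorem totally_balanced_general {B M S : Type*} [Fintype B]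
    (A : B → S → ℝ) (Ah : B → M → S → ℝ) (T : Finset (Player B M S)) :
    ∃ x : Player B M S → ℝ, ∑ t ∈ T, x t = vGame A Ah T ∧
      ∀ T' ⊆ T, vGame A Ah T' ≤ ∑ t ∈ T', x t := by
  obtain ⟨x, hx, hcover, g, hg, hsum⟩ :=
    exists_payoff_sum_le_m2val (bestSurplus A Ah T) (traders T)
  have hstable (T') (hT : T' ⊆ T) (f) (hf : IsMatching T' f) :
      mval A Ah f ≤ ∑ t ∈ T', aug x t := calc
    mval A Ah f ≤ m2val (bestSurplus A Ah T) (star f) := (hf.mono hT).mval_le_m2val_star A Ah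
    _ ≤ ∑ t ∈ traders T', x t := hf.isMatching2_star.m2val_le_sum hx fun i k hi hk =>
      hcover i k (inl_mem_traders.2 (hT (inl_mem_traders.1 hi)))
        (inr_mem_traders.2 (hT (inr_mem_traders.1 hk)))
    _ = ∑ t ∈ T', aug x t := (sum_aug T' x).symm
  obtain ⟨f, hf, hfg⟩ := hg.exists_isMatching_mval_eq A Ah
  have hworth : ∑ t ∈ T, aug x t ≤ vGame A Ah T := calc
    ∑ t ∈ T, aug x t = ∑ t ∈ traders T, x t := sum_aug T x
    _ ≤ mval A Ah f := hsum.trans_eq hfg.symm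
    _ ≤ vGame A Ah T := le_csSup ⟨_, by rintro _ ⟨f', hf', rfl⟩; exact hstable T subset_rfl f' hf'⟩
      ⟨f, hf, rfl⟩
  have hcore (T') (hT : T' ⊆ T) : vGame A Ah T' ≤ ∑ t ∈ T', aug x t :=
    vGame_le_of_forall_mval_le A Ah (hstable T' hT)
  exact ⟨aug x, hworth.antisymm (hcore T subset_rfl), hcore⟩

/-- the middlemen matching market game `v_γ` is totally balanced: for
every nonempty coalition `T`, the subgame on `T` has a nonempty core. -/
theorem totally_balanced
    {B M S : Type*} [Fintype B] [Fintype M] [Fintype S]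
    [Nonempty B] [Nonempty M] [Nonempty S]
    (A : B → S → ℝ) (Ah : B → M → S → ℝ)
    (hA : ∀ i k, 0 ≤ A i k) (hAh : ∀ i j k, A i k ≤ Ah i j k) :
    ∀ T : Finset (Player B M S), T.Nonempty →
      ∃ x : Player B M S → ℝ, ∑ t ∈ T, x t = vGame A Ah T ∧
        ∀ T' ⊆ T, vGame A Ah T' ≤ ∑ t ∈ T', x t := by
  intro T _
  exact totally_balanced_general A Ah T

end Middlemen
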